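/- Let u ∈ (−2, 2), d ∈ ℤ, and let ξₙ → ∞ be a sequence of positive reals with points xₙ, yₙ ∈ ℤ + 1/2 such that xₙ − yₙ = d for all n and xₙ/√ξₙ → u. Then K_Bessel(xₙ, yₙ; ξₙ) → K_sin(d; arccos(u/2)) as n → ∞. -/

import Mathlib

open Filter Topology

/-- The discrete sine kernel `K_sin(x; φ)`, for `x : ℤ`. -/
noncomputable def Ksin (x : ℤ) (φ : ℝ) : ℝ :=
  if x = 0 then φ / Real.pi else Real.sin (φ * x) / (Real.pi * x)

/-- The discrete Bessel kernel `K_Bessel(x, y; ξ)`, where the half-integers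
`x = a + 1/2`, `y = b + 1/2` are encoded by the integers `a`, `b`, so that
`z^{x+1/2} = z^{a+1}` and `w^{-y+1/2} = w^{-b}`. -/
noncomputable def besselKernel (a b : ℤ) (ξ : ℝ) : ℂ :=
  (2 * Real.pi * Complex.I)⁻¹ ^ 2 *
    ∮ z in C((0 : ℂ), 2), ∮ w in C((0 : ℂ), 1/2),
      Complex.exp ((Real.sqrt ξ : ℂ) * (z - z⁻¹ - w + w⁻¹)) /
        ((z - w) * z ^ (a + 1) * w ^ (-b))



open MeasureTheory in
lemma levy_weights (w : ℕ → ℤ → ℝ) (hw : ∀ n k, 0 ≤ w n k) (hM : ∀ n, HasSum (w n) 1)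
    (x : ℕ → ℤ → ℝ) (ν : Measure ℝ) [IsProbabilityMeasure ν]
    (hchar : ∀ t : ℝ, Tendsto (fun n => ∑' k, (w n k : ℂ) * Complex.exp (t * x n k * Complex.I))
      atTop (𝓝 (charFun ν t))) (hν : ν {0} = 0) :
    Tendsto (fun n => ∑' k, if x n k < 0 then w n k else 0) atTop (𝓝 (ν.real (Set.Iio 0))) := by
  have hs : ∀ n, HasSum (fun k => ENNReal.ofReal (w n k)) 1 := by
    intro n
    have := (ENNReal.ofReal_tsum_of_nonneg (hw n) (hM n).summable)
    rw [(hM n).tsum_eq, ENNReal.ofReal_one] at this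
    rw [this]; exact ENNReal.summable.hasSum
  let p : ℕ → PMF ℤ := fun n => ⟨fun k => ENNReal.ofReal (w n k), hs n⟩
  have hp : ∀ n k, p n k = ENNReal.ofReal (w n k) := fun n k => rfl
  have hmeas : ∀ n, Measurable (x n) := fun n => measurable_of_countable _
  let μ : ℕ → Measure ℝ := fun n => (p n).toMeasure.map (x n)
  have hμ : ∀ n, IsProbabilityMeasure (μ n) := fun n =>
    Measure.isProbabilityMeasure_map (hmeas n).aemeasurable
  let P : ℕ → ProbabilityMeasure ℝ := fun n => ⟨μ n, hμ n⟩
  have hcf : ∀ n t, charFun (μ n) t =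
      ∑' k, (w n k : ℂ) * Complex.exp (t * x n k * Complex.I) := by
    intro n t
    rw [charFun_apply_real, integral_map (hmeas n).aemeasurable (by fun_prop),
      PMF.integral_eq_tsum]
    · refine tsum_congr fun k => ?_
      rw [hp, ENNReal.toReal_ofReal (hw n k), Complex.real_smul]
    · refine Integrable.of_bound (C := 1) (measurable_of_countable _).aestronglyMeasurable ?_
      refine Eventually.of_forall fun k => ?_
      have : (t * x n k * Complex.I : ℂ) = ((t * x n k : ℝ) : ℂ) * Complex.I := by push_cast; ring
      rw [this, Complex.norm_exp_ofReal_mul_I]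
  have hconv : Tendsto P atTop (𝓝 (⟨ν, inferInstance⟩ : ProbabilityMeasure ℝ)) := by
    apply ProbabilityMeasure.tendsto_of_tendsto_charFun
    intro t
    have := hchar t
    simp_rw [← hcf] at this
    exact this
  have h2 := ProbabilityMeasure.tendsto_measure_of_null_frontier_of_tendsto' hconv
    (E := Set.Iio 0) (by rw [frontier_Iio]; exact hν)
  have h3 := (ENNReal.tendsto_toReal (measure_ne_top ν (Set.Iio 0))).comp h2
  refine h3.congr fun n => ?_
  change (μ n (Set.Iio 0)).toReal = _
  rw [Measure.map_apply (hmeas n) measurableSet_Iio, PMF.toMeasure_apply_eq_tsum]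
  rw [ENNReal.tsum_toReal_eq]
  · refine tsum_congr fun k => ?_
    by_cases h : x n k < 0
    · simp [h, Set.indicator, hp, hw]
    · simp [h, Set.indicator]
  · intro k
    refine ne_top_of_le_ne_top ?_ (Set.indicator_le_self _ _ _)
    rw [hp]; exact ENNReal.ofReal_ne_top

open MeasureTheory in
lemma levy_density (w : ℕ → ℤ → ℝ) (hw : ∀ n k, 0 ≤ w n k) (M : ℝ) (hM0 : 0 < M)
    (hM : ∀ n, HasSum (w n) M)
    (x : ℕ → ℤ → ℝ) (p f : ℝ → ℝ) (hp : Continuous p) (hf : Continuous f) (hp0 : ∀ θ, 0 ≤ p θ)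
    (hpM : ∫ θ in -Real.pi..Real.pi, p θ = M)
    (hchar : ∀ t : ℝ, Tendsto (fun n => ∑' k, (w n k : ℂ) * Complex.exp (t * x n k * Complex.I))
      atTop (𝓝 (∫ θ in -Real.pi..Real.pi, (p θ : ℂ) * Complex.exp (t * f θ * Complex.I))))
    (φ : ℝ) (hφ0 : 0 < φ) (hφ1 : φ < Real.pi)
    (hneg : ∀ θ ∈ Set.Ioc (-Real.pi) Real.pi, f θ < 0 ↔ θ ∈ Set.Ioo (-φ) φ)
    (hzero : ∀ θ ∈ Set.Ioc (-Real.pi) Real.pi, f θ = 0 → θ = -φ ∨ θ = φ) :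
    Tendsto (fun n => ∑' k, if x n k < 0 then w n k else 0) atTop
      (𝓝 (∫ θ in -φ..φ, p θ)) := by
  have hpi := Real.pi_pos
  let q : ℝ → ℝ := fun θ => p θ / M
  have hq : Continuous q := hp.div_const M
  have hq0 : ∀ θ, 0 ≤ q θ := fun θ => div_nonneg (hp0 θ) hM0.le
  let m : Measure ℝ := (volume.restrict (Set.Ioc (-Real.pi) Real.pi)).withDensity
    (fun θ => ENNReal.ofReal (q θ))
  have hmr : ∀ s, MeasurableSet s → m s =
      ENNReal.ofReal (∫ θ in s ∩ Set.Ioc (-Real.pi) Real.pi, q θ) := by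
    intro s hs
    rw [withDensity_apply _ hs, Measure.restrict_restrict hs, ofReal_integral_eq_lintegral_ofReal]
    · exact (hq.integrableOn_Ioc).mono_set Set.inter_subset_right
    · exact Eventually.of_forall hq0
  have : IsProbabilityMeasure m := by
    constructor
    rw [hmr _ MeasurableSet.univ, Set.univ_inter,
      ← intervalIntegral.integral_of_le (by linarith)]
    simp only [q]
    rw [intervalIntegral.integral_div, hpM, div_self hM0.ne', ENNReal.ofReal_one]
  let ν : Measure ℝ := m.map f
  have hνp : IsProbabilityMeasure ν := Measure.isProbabilityMeasure_map hf.measurable.aemeasurable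
  have hν0 : ν {0} = 0 := by
    rw [Measure.map_apply hf.measurable (measurableSet_singleton 0),
      hmr _ (hf.measurable (measurableSet_singleton 0)), setIntegral_measure_zero]
    · simp
    · refine measure_mono_null (t := {-φ, φ}) ?_ ?_
      · rintro θ ⟨h1, h2⟩
        exact hzero θ h2 h1
      · exact (Set.toFinite _).measure_zero _
  have key := levy_weights (fun n k => w n k / M) (fun n k => div_nonneg (hw n k) hM0.le)
    (fun n => by simpa [div_self hM0.ne'] using (hM n).div_const M) x ν ?_ hν0
  · have h2 := key.const_mul M
    have e : M * ν.real (Set.Iio 0) = ∫ θ in -φ..φ, p θ := by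
      rw [measureReal_def, Measure.map_apply hf.measurable measurableSet_Iio,
        hmr _ (hf.measurable measurableSet_Iio)]
      have : f ⁻¹' Set.Iio 0 ∩ Set.Ioc (-Real.pi) Real.pi = Set.Ioo (-φ) φ := by
        ext θ
        constructor
        · rintro ⟨h1, h2⟩
          exact (hneg θ h2).1 h1
        · intro h
          have h2 : θ ∈ Set.Ioc (-Real.pi) Real.pi := ⟨by linarith [h.1], by linarith [h.2]⟩
          exact ⟨(hneg θ h2).2 h, h2⟩
      rw [this, ← integral_Ioc_eq_integral_Ioo, ← intervalIntegral.integral_of_le (by linarith),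
        ENNReal.toReal_ofReal]
      · simp only [q]
        rw [intervalIntegral.integral_div]; field_simp
      · exact intervalIntegral.integral_nonneg (by linarith) fun θ _ => hq0 θ
    rw [← e]
    refine h2.congr fun n => ?_
    rw [← tsum_mul_left]
    refine tsum_congr fun k => ?_
    split_ifs
    · field_simp
    · simp
  · intro t
    have h2 := (hchar t).div_const (M : ℂ)
    have e : charFun ν t =
        (∫ θ in -Real.pi..Real.pi, (p θ : ℂ) * Complex.exp (t * f θ * Complex.I)) / M := by
      rw [charFun_apply_real, integral_map hf.measurable.aemeasurable (by fun_prop),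
        integral_withDensity_eq_integral_toReal_smul (by fun_prop) (by simp),
        intervalIntegral.integral_of_le (by linarith), ← integral_div]
      congr 1
      ext θ
      rw [ENNReal.toReal_ofReal (hq0 θ), Complex.real_smul]
      simp only [q]; push_cast; ring
    rw [e]
    refine h2.congr fun n => ?_
    rw [← tsum_div_const]
    refine tsum_congr fun k => ?_
    push_cast; ring


instance factTwoPi : Fact (0 < 2 * Real.pi) := ⟨Real.two_pi_pos⟩

open AddCircle MeasureTheory

open ComplexConjugate in
lemma parseval_cont (f g : C(AddCircle (2 * Real.pi), ℂ)) :
    HasSum (fun k : ℤ => conj (fourierCoeff f k) * fourierCoeff g k)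
      (∫ x, conj (f x) * g x ∂haarAddCircle) := by
  have h := (fourierBasis (T := 2 * Real.pi)).hasSum_inner_mul_inner
    (ContinuousMap.toLp (E := ℂ) 2 haarAddCircle ℂ f) (ContinuousMap.toLp (E := ℂ) 2 haarAddCircle ℂ g)
  rw [ContinuousMap.inner_toLp] at h
  have e1 : ∀ k : ℤ, conj (fourierCoeff f k) * fourierCoeff g k =
      inner ℂ (ContinuousMap.toLp (E := ℂ) 2 haarAddCircle ℂ f) (fourierBasis (T := 2 * Real.pi) k) *
      inner ℂ (fourierBasis (T := 2 * Real.pi) k) (ContinuousMap.toLp (E := ℂ) 2 haarAddCircle ℂ g) := by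
    intro k
    rw [← inner_conj_symm, ← HilbertBasis.repr_apply_apply, ← HilbertBasis.repr_apply_apply,
      fourierBasis_repr, fourierBasis_repr, fourierCoeff_toLp, fourierCoeff_toLp]
  simp_rw [e1, mul_comm (conj _)]
  exact h

lemma fourier_two_pi (n : ℤ) (θ : ℝ) :
    fourier n (θ : AddCircle (2 * Real.pi)) = Complex.exp (n * θ * Complex.I) := by
  rw [fourier_coe_apply]
  congr 1
  have : (Real.pi : ℂ) ≠ 0 := by exact_mod_cast Real.pi_ne_zero
  push_cast
  field_simp

lemma fourierCoeff_translate (f : C(AddCircle (2 * Real.pi), ℂ)) (δ : ℝ) (k : ℤ) :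
    fourierCoeff (fun x => f (x + (δ : AddCircle (2 * Real.pi)))) k
      = Complex.exp (k * δ * Complex.I) * fourierCoeff f k := by
  unfold fourierCoeff
  rw [← integral_add_right_eq_self (μ := haarAddCircle) (fun t => fourier (-k) t • f t) (δ : AddCircle (2 * Real.pi)),
    ← integral_const_mul]
  congr 1
  ext x
  have : fourier (-k) (x + (δ : AddCircle (2 * Real.pi))) =
      fourier (-k) x * Complex.exp (-(k * δ * Complex.I)) := by
    have := fourier_two_pi (-k) δ
    rw [fourier_apply] at this ⊢
    rw [smul_add, AddCircle.toCircle_add, Circle.coe_mul, this, fourier_apply]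
    congr 2; push_cast; ring
  simp only [smul_eq_mul]
  rw [this, Complex.exp_neg]
  have := Complex.exp_ne_zero (k * δ * Complex.I)
  field_simp

lemma haar_integral_eq (f : AddCircle (2 * Real.pi) → ℂ) :
    ∫ x, f x ∂haarAddCircle = (2 * Real.pi : ℂ)⁻¹ * ∫ θ in -Real.pi..Real.pi, f θ := by
  rw [integral_haarAddCircle]
  have := AddCircle.intervalIntegral_preimage (2 * Real.pi) (-Real.pi) f
  rw [← this, Complex.real_smul]
  congr 2
  · push_cast; ring
  · ring

/-- The generating function of Bessel functions on the circle. -/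
noncomputable def besselG (s : ℝ) : C(AddCircle (2 * Real.pi), ℂ) :=
  ⟨fun x => Complex.exp (s * (fourier 1 x - fourier (-1) x)), by fun_prop⟩

/-- Bessel function `J_m(2s)` as a Fourier coefficient. -/
noncomputable def besselJ (s : ℝ) (m : ℤ) : ℂ := fourierCoeff (besselG s) m

lemma besselG_coe (s θ : ℝ) : besselG s (θ : AddCircle (2 * Real.pi)) =
    Complex.exp ((2 * s * Real.sin θ : ℝ) * Complex.I) := by
  change Complex.exp (s * (fourier 1 (θ : AddCircle (2 * Real.pi)) - fourier (-1) (θ : AddCircle (2 * Real.pi)))) = _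
  rw [fourier_two_pi, fourier_two_pi]
  congr 1
  push_cast
  rw [Complex.sin]
  have := Complex.I_sq
  simp only [one_mul, neg_mul]
  linear_combination (s * (Complex.exp (θ * Complex.I) - Complex.exp (-(θ * Complex.I)))) * this

open ComplexConjugate in
lemma besselJ_conj (s : ℝ) (m : ℤ) : conj (besselJ s m) = besselJ s m := by
  unfold besselJ fourierCoeff
  rw [← integral_conj, ← integral_neg_eq_self (μ := haarAddCircle)]
  congr 1
  ext x
  induction x using QuotientAddGroup.induction_on with | H θ => ?_
  change conj (fourier (-m) (-(θ : AddCircle (2 * Real.pi))) • besselG s (-(θ : AddCircle (2 * Real.pi)))) =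
    fourier (-m) (θ : AddCircle (2 * Real.pi)) • besselG s (θ : AddCircle (2 * Real.pi))
  rw [← AddCircle.coe_neg, besselG_coe, besselG_coe, fourier_two_pi, fourier_two_pi]
  simp only [smul_eq_mul, map_mul, ← Complex.exp_conj, Complex.conj_I, Complex.conj_ofReal, map_intCast]
  rw [Real.sin_neg]
  push_cast
  congr 2 <;> ring

lemma besselJ_norm_le (s : ℝ) (m : ℤ) : ‖besselJ s m‖ ≤ 1 := by
  unfold besselJ fourierCoeff
  have := norm_integral_le_of_norm_le_const (μ := haarAddCircle (T := 2 * Real.pi)) (C := 1) (f := fun t => fourier (-m) t • besselG s t) ?_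
  · simpa using this
  · refine Eventually.of_forall fun x => ?_
    induction x using QuotientAddGroup.induction_on with | H θ => ?_
    change ‖fourier (-m) (θ : AddCircle (2 * Real.pi)) • besselG s (θ : AddCircle (2 * Real.pi))‖ ≤ 1
    have : ((-m : ℤ) * θ * Complex.I : ℂ) = ((-m * θ : ℝ) : ℂ) * Complex.I := by push_cast; ring
    rw [besselG_coe, norm_smul, Complex.norm_exp_ofReal_mul_I, fourier_two_pi, this,
      Complex.norm_exp_ofReal_mul_I, mul_one]

/-- The test function. -/
noncomputable def testH (s c : ℝ) (a b : ℤ) : C(AddCircle (2 * Real.pi), ℂ) :=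
  ⟨fun x => besselG s x * (fourier (-a) x + c * fourier (-b) x), by fun_prop⟩

lemma testH_coeff (s c : ℝ) (a b k : ℤ) :
    fourierCoeff (testH s c a b) k = besselJ s (a + k) + c * besselJ s (b + k) := by
  unfold besselJ fourierCoeff
  rw [← integral_const_mul, ← integral_add]
  · congr 1
    ext x
    change fourier (-k) x • (besselG s x * (fourier (-a) x + c * fourier (-b) x)) = _
    simp only [smul_eq_mul, neg_add, fourier_add]
    ring
  · exact (Continuous.integrable_of_hasCompactSupport (by fun_prop) (HasCompactSupport.of_compactSpace _))
  · exact (Continuous.integrable_of_hasCompactSupport (by fun_prop) (HasCompactSupport.of_compactSpace _))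

open ComplexConjugate in
lemma testH_hasSum (s c δ : ℝ) (a b : ℤ) :
    HasSum (fun k : ℤ => ((‖besselJ s (a + k) + c * besselJ s (b + k)‖ ^ 2 : ℝ) : ℂ) *
        Complex.exp (k * δ * Complex.I))
      ((2 * Real.pi : ℂ)⁻¹ * ∫ θ in -Real.pi..Real.pi,
        Complex.exp ((2 * s * (Real.sin (θ + δ) - Real.sin θ) - a * δ : ℝ) * Complex.I) *
        ((1 + c * Complex.exp (-((a - b : ℤ) * θ * Complex.I))) *
          (1 + c * Complex.exp ((a - b : ℤ) * (θ + δ) * Complex.I)))) := by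
  have h := parseval_cont (testH s c a b)
    ⟨fun x => testH s c a b (x + (δ : AddCircle (2 * Real.pi))), by fun_prop⟩
  rw [haar_integral_eq] at h
  convert h using 1
  · ext k
    have := fourierCoeff_translate (testH s c a b) δ k
    simp only [ContinuousMap.coe_mk]
    rw [this, testH_coeff]
    rw [mul_left_comm, mul_comm (conj _), Complex.mul_conj, Complex.normSq_eq_norm_sq]
    ring
  · congr 2
    ext θ
    change _ = conj (besselG s (θ : AddCircle (2 * Real.pi)) * (fourier (-a) (θ : AddCircle (2 * Real.pi)) + c * fourier (-b) (θ : AddCircle (2 * Real.pi)))) *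
      (besselG s ((θ + δ : ℝ) : AddCircle (2 * Real.pi)) * (fourier (-a) ((θ + δ : ℝ) : AddCircle (2 * Real.pi)) + c * fourier (-b) ((θ + δ : ℝ) : AddCircle (2 * Real.pi))))
    simp only [besselG_coe, fourier_two_pi]
    simp only [map_mul, map_add, ← Complex.exp_conj, Complex.conj_I, Complex.conj_ofReal, map_intCast]
    have e1 : Complex.exp (((-b : ℤ) : ℂ) * θ * -Complex.I) = Complex.exp (((-a : ℤ) : ℂ) * θ * -Complex.I) * Complex.exp (-((a - b : ℤ) * θ * Complex.I)) := by
      rw [← Complex.exp_add]; congr 1; push_cast; ring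
    have e2 : Complex.exp (((-b : ℤ) : ℂ) * ((θ + δ : ℝ) : ℂ) * Complex.I) = Complex.exp (((-a : ℤ) : ℂ) * ((θ + δ : ℝ) : ℂ) * Complex.I) * Complex.exp ((a - b : ℤ) * (θ + δ) * Complex.I) := by
      rw [← Complex.exp_add]; congr 1; push_cast; ring
    have e3 : Complex.exp ((2 * s * (Real.sin (θ + δ) - Real.sin θ) - a * δ : ℝ) * Complex.I) =
      Complex.exp ((2 * s * Real.sin θ : ℝ) * -Complex.I) * Complex.exp (((-a : ℤ) : ℂ) * θ * -Complex.I) *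
      (Complex.exp ((2 * s * Real.sin (θ + δ) : ℝ) * Complex.I) * Complex.exp (((-a : ℤ) : ℂ) * ((θ + δ : ℝ) : ℂ) * Complex.I)) := by
      rw [← Complex.exp_add, ← Complex.exp_add, ← Complex.exp_add]; congr 1; push_cast; ring
    rw [e1, e2, e3]
    ring


lemma hasSum_circle (R : ℝ) (hR : 0 < R) (g q : ℂ → ℂ) (hg : ContinuousOn g (Metric.sphere 0 R))
    (hq : ContinuousOn q (Metric.sphere 0 R)) (ρ : ℝ) (hρ0 : 0 ≤ ρ) (hρ : ρ < 1)
    (hqρ : ∀ z ∈ Metric.sphere (0 : ℂ) R, ‖q z‖ ≤ ρ) (c : ℕ → ℂ) (hc : ∀ k, ‖c k‖ ≤ 1) :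
    HasSum (fun k : ℕ => ∮ z in C((0 : ℂ), R), g z * q z ^ k * c k)
      (∮ z in C((0 : ℂ), R), ∑' k : ℕ, g z * q z ^ k * c k) := by
  have hmap : ∀ θ, circleMap 0 R θ ∈ Metric.sphere (0 : ℂ) R :=
    fun θ => circleMap_mem_sphere 0 hR.le θ
  obtain ⟨B, hB⟩ := (isCompact_sphere (0 : ℂ) R).exists_bound_of_continuousOn hg
  have hgc : Continuous fun θ => g (circleMap 0 R θ) :=
    hg.comp_continuous (continuous_circleMap 0 R) hmap
  have hqc : Continuous fun θ => q (circleMap 0 R θ) :=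
    hq.comp_continuous (continuous_circleMap 0 R) hmap
  have hbd : ∀ (k : ℕ) θ, ‖g (circleMap 0 R θ) * q (circleMap 0 R θ) ^ k * c k‖ ≤ B * ρ ^ k := by
    intro k θ
    have hB0 : 0 ≤ B := (norm_nonneg _).trans (hB _ (hmap θ))
    rw [norm_mul, norm_mul, norm_pow]
    calc _ ≤ B * ρ ^ k * 1 := by
          gcongr
          · exact hB _ (hmap θ)
          · exact hqρ _ (hmap θ)
          · exact hc k
      _ = _ := mul_one _
  have hsum : Summable fun k : ℕ => B * ρ ^ k := (summable_geometric_of_lt_one hρ0 hρ).mul_left B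
  unfold circleIntegral
  refine intervalIntegral.hasSum_integral_of_dominated_convergence
    (fun k _ => R * (B * ρ ^ k)) ?_ ?_ ?_ ?_ ?_
  · intro k
    apply Continuous.aestronglyMeasurable
    simp only [deriv_circleMap]
    have := continuous_circleMap 0 R
    exact (this.mul continuous_const).smul ((hgc.mul (hqc.pow k)).mul continuous_const)
  · intro k
    refine Eventually.of_forall fun θ _ => ?_
    rw [norm_smul, deriv_circleMap, norm_mul, Complex.norm_I, mul_one, norm_circleMap_zero,
      abs_of_pos hR]
    exact mul_le_mul_of_nonneg_left (hbd k θ) hR.le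
  · exact Eventually.of_forall fun θ _ => hsum.mul_left R
  · exact intervalIntegrable_const
  · refine Eventually.of_forall fun θ _ => ?_
    exact (Summable.of_norm_bounded hsum fun k => hbd k θ).hasSum.const_smul _

lemma circle_to_unit (R : ℝ) (hR : 0 < R) (f : ℂ → ℂ)
    (hf : ∀ z, z ≠ 0 → DifferentiableAt ℂ f z) :
    (∮ z in C((0 : ℂ), R), f z) = ∮ z in C((0 : ℂ), 1), f z := by
  have key : ∀ r₁ r₂ : ℝ, 0 < r₁ → r₁ ≤ r₂ →
      (∮ z in C((0 : ℂ), r₂), f z) = ∮ z in C((0 : ℂ), r₁), f z := by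
    intro r₁ r₂ h0 hle
    refine Complex.circleIntegral_eq_of_differentiable_on_annulus_off_countable h0 hle
      Set.countable_empty ?_ ?_
    · intro z hz
      refine (hf z ?_).continuousAt.continuousWithinAt
      rintro rfl
      exact hz.2 (Metric.mem_ball_self h0)
    · intro z hz
      refine hf z ?_
      rintro rfl
      exact hz.1.2 (Metric.mem_closedBall_self h0.le)
  rcases le_total R 1 with h | h
  · exact (key R 1 hR h).symm
  · exact key 1 R one_pos h

lemma circle_z (s : ℝ) (m : ℤ) (R : ℝ) (hR : 0 < R) :
    (∮ z in C((0 : ℂ), R), Complex.exp (s * (z - z⁻¹)) * z ^ (-m - 1)) =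
      2 * Real.pi * Complex.I * besselJ s m := by
  rw [circle_to_unit R hR]
  · unfold besselJ
    rw [fourierCoeff_eq_intervalIntegral _ m 0, circleIntegral, zero_add, Complex.real_smul]
    have hpi : (Real.pi : ℂ) ≠ 0 := by exact_mod_cast Real.pi_ne_zero
    push_cast
    rw [← mul_assoc, show 2 * (Real.pi : ℂ) * Complex.I * (1 / (2 * Real.pi)) = Complex.I by field_simp,
      ← intervalIntegral.integral_const_mul]
    congr 1
    ext θ
    rw [besselG_coe, fourier_two_pi, deriv_circleMap, circleMap_zero]
    simp only [smul_eq_mul, Complex.ofReal_one, one_mul]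
    rw [← Complex.exp_int_mul, ← Complex.exp_neg]
    have e1 : (s : ℂ) * (Complex.exp (θ * Complex.I) - Complex.exp (-(θ * Complex.I))) =
        (2 * s * Real.sin θ : ℝ) * Complex.I := by
      push_cast
      rw [Complex.sin, neg_mul]
      linear_combination (s * (Complex.exp (θ * Complex.I) - Complex.exp (-(θ * Complex.I)))) * Complex.I_sq
    rw [e1]
    have e2 : Complex.exp (((-m : ℤ) : ℂ) * θ * Complex.I) =
      Complex.exp (θ * Complex.I) * Complex.exp (((-m - 1 : ℤ) : ℂ) * (θ * Complex.I)) := by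
      rw [← Complex.exp_add]; congr 1; push_cast; ring
    rw [e2]; ring
  · intro z hz
    have := differentiableAt_zpow (𝕜 := ℂ) (x := z) (m := -m - 1) |>.2 (Or.inl hz)
    have := differentiableAt_inv (𝕜 := ℂ) hz
    fun_prop (disch := assumption)

lemma circle_w (s : ℝ) (m : ℤ) (R : ℝ) (hR : 0 < R) :
    (∮ z in C((0 : ℂ), R), Complex.exp (-(s * (z - z⁻¹))) * z ^ (m - 1)) =
      2 * Real.pi * Complex.I * besselJ s m := by
  rw [circle_to_unit R hR]
  · rw [← besselJ_conj]
    unfold besselJ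
    rw [fourierCoeff_eq_intervalIntegral _ m 0, circleIntegral, zero_add, Complex.real_smul]
    have hpi : (Real.pi : ℂ) ≠ 0 := by exact_mod_cast Real.pi_ne_zero
    have hcj : ∀ F : ℝ → ℂ, (starRingEnd ℂ) (∫ θ in (0 : ℝ)..2 * Real.pi, F θ) =
        ∫ θ in (0 : ℝ)..2 * Real.pi, (starRingEnd ℂ) (F θ) := by
      intro F
      rw [intervalIntegral.integral_of_le Real.two_pi_pos.le,
        intervalIntegral.integral_of_le Real.two_pi_pos.le, integral_conj]
    rw [map_mul, hcj, Complex.conj_ofReal]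
    push_cast
    rw [← mul_assoc, show 2 * (Real.pi : ℂ) * Complex.I * (1 / (2 * Real.pi)) = Complex.I by field_simp,
      ← intervalIntegral.integral_const_mul]
    congr 1
    ext θ
    rw [besselG_coe, fourier_two_pi, deriv_circleMap, circleMap_zero]
    simp only [smul_eq_mul, Complex.ofReal_one, one_mul, map_mul, ← Complex.exp_conj, Complex.conj_I,
      Complex.conj_ofReal, map_intCast]
    rw [← Complex.exp_int_mul, ← Complex.exp_neg]
    have e1 : -((s : ℂ) * (Complex.exp (θ * Complex.I) - Complex.exp (-(θ * Complex.I)))) =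
        (2 * s * Real.sin θ : ℝ) * -Complex.I := by
      push_cast
      rw [Complex.sin, neg_mul]
      linear_combination (-s * (Complex.exp (θ * Complex.I) - Complex.exp (-(θ * Complex.I)))) * Complex.I_sq
    rw [e1]
    have e2 : Complex.exp (((-m : ℤ) : ℂ) * θ * -Complex.I) =
      Complex.exp (θ * Complex.I) * Complex.exp (((m - 1 : ℤ) : ℂ) * (θ * Complex.I)) := by
      rw [← Complex.exp_add]; congr 1; push_cast; ring
    rw [e2]; ring
  · intro z hz
    have := differentiableAt_zpow (𝕜 := ℂ) (x := z) (m := m - 1) |>.2 (Or.inl hz)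
    have := differentiableAt_inv (𝕜 := ℂ) hz
    fun_prop (disch := assumption)

lemma besselKernel_eq (a b : ℤ) (ξ : ℝ) :
    HasSum (fun k : ℕ => besselJ (Real.sqrt ξ) (a + (k + 1)) * besselJ (Real.sqrt ξ) (b + (k + 1)))
      (besselKernel a b ξ) := by
  set s := Real.sqrt ξ with hs
  have hpi : (Real.pi : ℂ) ≠ 0 := by exact_mod_cast Real.pi_ne_zero
  have hne : ∀ R : ℝ, 0 < R → ∀ z ∈ Metric.sphere (0 : ℂ) R, z ≠ 0 := by
    rintro R hR z hz rfl
    simp at hz; linarith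
  -- inner integral
  have inner : ∀ z ∈ Metric.sphere (0 : ℂ) 2,
      (∮ w in C((0 : ℂ), 1/2), Complex.exp ((s : ℂ) * (z - z⁻¹ - w + w⁻¹)) /
        ((z - w) * z ^ (a + 1) * w ^ (-b))) =
      2 * Real.pi * Complex.I * ∑' k : ℕ, Complex.exp (s * (z - z⁻¹)) * z ^ (-a - 2) * (z⁻¹) ^ k *
        besselJ s (b + (k + 1)) := by
    intro z hz
    have hz0 : z ≠ 0 := hne 2 two_pos z hz
    have hzn : ‖z‖ = 2 := by simpa using hz
    have h1 := hasSum_circle (1/2) (by norm_num)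
      (fun w => Complex.exp (s * (z - z⁻¹)) * z ^ (-a - 2) * (Complex.exp (-(s * (w - w⁻¹))) * w ^ b))
      (fun w => w * z⁻¹) ?_ (by fun_prop) (1/4) (by norm_num) (by norm_num) ?_ (fun _ => 1) (by simp)
    · rw [← tsum_mul_left]
      have e : ∀ k : ℕ, 2 * Real.pi * Complex.I * (Complex.exp (s * (z - z⁻¹)) * z ^ (-a - 2) * (z⁻¹) ^ k *
          besselJ s (b + (k + 1))) = ∮ w in C((0 : ℂ), 1/2), Complex.exp (s * (z - z⁻¹)) * z ^ (-a - 2) * (Complex.exp (-(s * (w - w⁻¹))) * w ^ b) *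
            (w * z⁻¹) ^ k * 1 := by
        intro k
        have h2 := circle_w s (b + (k + 1)) (1/2) (by norm_num)
        have : 2 * Real.pi * Complex.I * (Complex.exp (s * (z - z⁻¹)) * z ^ (-a - 2) * (z⁻¹) ^ k *
          besselJ s (b + (k + 1))) = (Complex.exp (s * (z - z⁻¹)) * z ^ (-a - 2) * (z⁻¹) ^ k) *
          (2 * Real.pi * Complex.I * besselJ s (b + (k + 1))) := by ring
        rw [this, ← h2, ← circleIntegral.integral_const_mul]
        refine circleIntegral.integral_congr (by norm_num) fun w hw => ?_
        have hw0 : w ≠ 0 := hne _ (by norm_num) w hw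
        have : w ^ (b + (k + 1 : ℤ) - 1) = w ^ b * w ^ k := by
          rw [← zpow_natCast, ← zpow_add₀ hw0]; congr 1; ring
        simp only [this, mul_pow]
        ring
      simp_rw [e]
      rw [h1.tsum_eq]
      refine circleIntegral.integral_congr (by norm_num) fun w hw => ?_
      have hw0 : w ≠ 0 := hne _ (by norm_num) w hw
      have hwn : ‖w‖ = 1/2 := by simpa using hw
      simp only [mul_one]
      rw [tsum_mul_left, tsum_geometric_of_norm_lt_one (by rw [norm_mul, norm_inv, hzn, hwn]; norm_num)]
      have hzw : z - w ≠ 0 := by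
        intro h
        rw [sub_eq_zero] at h
        rw [h, hwn] at hzn; norm_num at hzn
      have e1 : Complex.exp ((s : ℂ) * (z - z⁻¹ - w + w⁻¹)) = Complex.exp (s * (z - z⁻¹)) * Complex.exp (-(s * (w - w⁻¹))) := by
        rw [← Complex.exp_add]; congr 1; ring
      have e2 : z ^ (-a - 2) = (z ^ (a + 1))⁻¹ * z⁻¹ := by
        rw [← zpow_neg, ← zpow_sub_one₀ hz0]; congr 1; ring
      have e3 : 1 - w * z⁻¹ = (z - w) * z⁻¹ := by field_simp
      rw [e1, e2, e3, zpow_neg]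
      have := zpow_ne_zero (a + 1) hz0
      have := zpow_ne_zero b hw0
      field_simp
    · intro w hw
      have hw0 : w ≠ 0 := hne _ (by norm_num) w hw
      have := (continuousAt_zpow₀ w b (Or.inl hw0)).continuousWithinAt (s := Metric.sphere (0 : ℂ) (1/2))
      have := (continuousAt_inv₀ hw0).continuousWithinAt (s := Metric.sphere (0 : ℂ) (1/2))
      fun_prop (disch := assumption)
    · intro w hw
      have hwn : ‖w‖ = 1/2 := by simpa using hw
      rw [norm_mul, norm_inv, hzn, hwn]; norm_num
  have h2 := hasSum_circle 2 (by norm_num)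
      (fun z => Complex.exp (s * (z - z⁻¹)) * z ^ (-a - 2))
      (fun z => z⁻¹) ?_ ?_ (1/2) (by norm_num) (by norm_num) ?_ (fun k => besselJ s (b + (k + 1)))
      (fun k => besselJ_norm_le _ _)
  · have h3 := h2.mul_left (2 * Real.pi * Complex.I)⁻¹
    have e5 : ∀ k : ℕ, besselJ s (a + (k + 1)) * besselJ s (b + (k + 1)) =
        (2 * Real.pi * Complex.I)⁻¹ * ∮ z in C((0 : ℂ), 2),
          Complex.exp (s * (z - z⁻¹)) * z ^ (-a - 2) * (z⁻¹) ^ k * besselJ s (b + (k + 1)) := by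
      intro k
      have h4 := circle_z s (a + (k + 1)) 2 (by norm_num)
      have : (∮ z in C((0 : ℂ), 2), Complex.exp (s * (z - z⁻¹)) * z ^ (-a - 2) * (z⁻¹) ^ k * besselJ s (b + (k + 1))) =
        besselJ s (b + (k + 1)) * ∮ z in C((0 : ℂ), 2), Complex.exp (s * (z - z⁻¹)) * z ^ (-(a + (k + 1 : ℤ)) - 1) := by
        rw [← circleIntegral.integral_const_mul]
        refine circleIntegral.integral_congr (by norm_num) fun z hz => ?_
        have hz0 : z ≠ 0 := hne 2 two_pos z hz
        have : z ^ (-(a + (k + 1 : ℤ)) - 1) = z ^ (-a - 2) * (z⁻¹) ^ k := by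
          rw [inv_pow, ← zpow_natCast, ← zpow_neg, ← zpow_add₀ hz0]; congr 1; ring
        simp only [this]
        ring
      rw [this, h4]
      field_simp
    have e6 : besselKernel a b ξ = (2 * Real.pi * Complex.I)⁻¹ * ∮ z in C((0 : ℂ), 2),
        ∑' k : ℕ, Complex.exp (s * (z - z⁻¹)) * z ^ (-a - 2) * (z⁻¹) ^ k *
          besselJ s (b + (k + 1)) := by
      unfold besselKernel
      rw [← hs, circleIntegral.integral_congr (by norm_num) inner,
        circleIntegral.integral_const_mul]
      field_simp
    simp_rw [e5, e6]
    exact h3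
  · intro w hw
    have hw0 : w ≠ 0 := hne _ (by norm_num) w hw
    have := (continuousAt_zpow₀ w (-a - 2) (Or.inl hw0)).continuousWithinAt (s := Metric.sphere (0 : ℂ) 2)
    have := (continuousAt_inv₀ hw0).continuousWithinAt (s := Metric.sphere (0 : ℂ) 2)
    fun_prop (disch := assumption)
  · intro w hw
    have hw0 : w ≠ 0 := hne _ (by norm_num) w hw
    exact (continuousAt_inv₀ hw0).continuousWithinAt
  · intro w hw
    have hwn : ‖w‖ = 2 := by simpa using hw
    rw [norm_inv, hwn]; norm_num


lemma hasSum_int_pos (f : ℤ → ℝ) (s : ℝ) (hs : 0 < s) :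
    (∑' k : ℤ, if -(k : ℝ) / s < 0 then f k else 0) = ∑' k : ℕ, f (k + 1) := by
  have hinj : Function.Injective (fun k : ℕ => (k : ℤ) + 1) := fun x y h => by simpa using h
  rw [← hinj.tsum_eq]
  · refine tsum_congr fun k => ?_
    rw [if_pos]
    apply div_neg_of_neg_of_pos _ hs
    push_cast
    have : (0 : ℝ) ≤ k := k.cast_nonneg
    linarith
  · intro k hk
    have h : -(k : ℝ) / s < 0 := by
      by_contra h
      simp [h] at hk
    have hk0 : 0 < k := by
      by_contra h'
      push Not at h'
      have : (k : ℝ) ≤ 0 := by exact_mod_cast h'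
      have : 0 ≤ -(k : ℝ) / s := div_nonneg (by linarith) hs.le
      linarith
    refine ⟨(k - 1).toNat, ?_⟩
    simp only
    omega

lemma S_limit (u : ℝ) (hu : u ∈ Set.Ioo (-2 : ℝ) 2) (d : ℤ)
    (s : ℕ → ℝ) (hpos : ∀ n, 0 < s n) (hs : Tendsto s atTop atTop)
    (a b : ℕ → ℤ) (hd : ∀ n, a n - b n = d)
    (ha : Tendsto (fun n => (a n : ℝ) / s n) atTop (𝓝 u)) (c : ℝ) (hc : |c| < 1) :
    Tendsto (fun n => ∑' k : ℤ, if -(k : ℝ) / s n < 0 then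
        ‖besselJ (s n) (a n + k) + c * besselJ (s n) (b n + k)‖ ^ 2 else 0) atTop
      (𝓝 (∫ θ in -Real.arccos (u / 2)..Real.arccos (u / 2),
        (1 + c ^ 2 + 2 * c * Real.cos (d * θ)) / (2 * Real.pi))) := by
  have hpi := Real.pi_pos
  have hpiC : (Real.pi : ℂ) ≠ 0 := by exact_mod_cast hpi.ne'
  obtain ⟨hu1, hu2⟩ := hu
  set φ := Real.arccos (u / 2) with hφ
  have hcosφ : Real.cos φ = u / 2 := Real.cos_arccos (by linarith) (by linarith)
  have hφ0 : 0 < φ := Real.arccos_pos.2 (by linarith)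
  have hφ1 : φ < Real.pi := by
    refine lt_of_le_of_ne (Real.arccos_le_pi _) fun h => ?_
    have := Real.arccos_eq_pi.1 h
    linarith
  let p : ℝ → ℝ := fun θ => (1 + c ^ 2 + 2 * c * Real.cos (d * θ)) / (2 * Real.pi)
  have hp : Continuous p := by fun_prop
  have hp0 : ∀ θ, 0 < p θ := by
    intro θ
    refine div_pos ?_ (by positivity)
    have h1 : |c * Real.cos (d * θ)| ≤ |c| := by
      rw [abs_mul]
      exact mul_le_of_le_one_right (abs_nonneg _) (Real.abs_cos_le_one _)
    have h2 := neg_abs_le (c * Real.cos (d * θ))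
    nlinarith [sq_abs c]
  have hprod : ∀ θ : ℝ, (2 * Real.pi : ℂ)⁻¹ * ((1 + c * Complex.exp (-((d : ℤ) * θ * Complex.I))) *
          (1 + c * Complex.exp ((d : ℤ) * θ * Complex.I))) = (p θ : ℂ) := by
    intro θ
    simp only [p]
    push_cast
    rw [Complex.cos]
    have : Complex.exp (-((d : ℤ) * θ * Complex.I)) * Complex.exp ((d : ℤ) * θ * Complex.I) = 1 := by
      rw [← Complex.exp_add]; simp
    rw [neg_mul]
    field_simp
    linear_combination (c : ℂ) ^ 2 * this
  refine levy_density (fun n k => ‖besselJ (s n) (a n + k) + c * besselJ (s n) (b n + k)‖ ^ 2)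
    (fun n k => by positivity) (∫ θ in -Real.pi..Real.pi, p θ) ?_ ?_ (fun n k => -(k : ℝ) / s n)
    p (fun θ => u - 2 * Real.cos θ) hp (by fun_prop) (fun θ => (hp0 θ).le) rfl ?_ φ hφ0 hφ1 ?_ ?_
  · exact intervalIntegral.intervalIntegral_pos_of_pos (hp.intervalIntegrable _ _) hp0 (by linarith)
  · intro n
    have h := testH_hasSum (s n) c 0 (a n) (b n)
    rw [hd n, ← intervalIntegral.integral_const_mul] at h
    rw [← Complex.hasSum_ofReal, ← intervalIntegral.integral_ofReal]
    convert h using 1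
    · ext k; simp
    · congr 1
      ext θ
      rw [← hprod]
      simp
  · intro t
    have e : ∀ n, (∑' k : ℤ, ((‖besselJ (s n) (a n + k) + c * besselJ (s n) (b n + k)‖ ^ 2 : ℝ) : ℂ) *
        Complex.exp (t * ((-(k : ℝ) / s n : ℝ) : ℂ) * Complex.I)) =
        ∫ θ in -Real.pi..Real.pi, (2 * Real.pi : ℂ)⁻¹ *
        (Complex.exp ((2 * s n * (Real.sin (θ + (-t / s n)) - Real.sin θ) - a n * (-t / s n) : ℝ) * Complex.I) *
        ((1 + c * Complex.exp (-((d : ℤ) * θ * Complex.I))) *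
          (1 + c * Complex.exp ((d : ℤ) * (θ + (-t / s n : ℝ)) * Complex.I)))) := by
      intro n
      have h := testH_hasSum (s n) c (-t / s n) (a n) (b n)
      rw [hd n, ← intervalIntegral.integral_const_mul] at h
      rw [← h.tsum_eq]
      refine tsum_congr fun k => ?_
      congr 2
      push_cast; ring
    simp_rw [e]
    have hδ : Tendsto (fun n => -t / s n) atTop (𝓝 0) := hs.const_div_atTop _
    refine intervalIntegral.tendsto_integral_filter_of_dominated_convergence
      (fun _ => (2 * Real.pi)⁻¹ * (1 * ((1 + |c|) * (1 + |c|)))) ?_ ?_ intervalIntegrable_const ?_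
    · refine Eventually.of_forall fun n => Continuous.aestronglyMeasurable ?_
      fun_prop
    · refine Eventually.of_forall fun n => Eventually.of_forall fun θ _ => ?_
      have hb : ∀ y : ℝ, ‖1 + (c : ℂ) * Complex.exp (y * Complex.I)‖ ≤ 1 + |c| := by
        intro y
        refine (norm_add_le _ _).trans ?_
        rw [norm_mul, Complex.norm_exp_ofReal_mul_I]
        simp
      have h1 := hb (-(d * θ))
      have h2 := hb (d * (θ + (-t / s n)))
      have e1 : ((-(d * θ) : ℝ) : ℂ) * Complex.I = -((d : ℤ) * θ * Complex.I) := by push_cast; ring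
      have e2 : ((d * (θ + (-t / s n)) : ℝ) : ℂ) * Complex.I =
        (d : ℤ) * (θ + (-t / s n : ℝ)) * Complex.I := by push_cast; ring
      rw [e1] at h1
      rw [e2] at h2
      rw [norm_mul, norm_mul, norm_mul, Complex.norm_exp_ofReal_mul_I]
      have e3 : ‖(2 * Real.pi : ℂ)⁻¹‖ = (2 * Real.pi)⁻¹ := by
        rw [norm_inv, norm_mul, Complex.norm_real, Real.norm_of_nonneg hpi.le]; simp
      rw [e3]
      gcongr
    · refine Eventually.of_forall fun θ _ => ?_
      have hph : Tendsto (fun n => 2 * s n * (Real.sin (θ + (-t / s n)) - Real.sin θ) - a n * (-t / s n))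
          atTop (𝓝 (t * (u - 2 * Real.cos θ))) := by
        rcases eq_or_ne t 0 with rfl | ht
        · simp
        · have h1 := (hasDerivAt_iff_tendsto_slope_zero.1 (Real.hasDerivAt_sin θ)).comp
            (tendsto_nhdsWithin_iff.2 ⟨hδ, Eventually.of_forall fun n =>
              div_ne_zero (neg_ne_zero.2 ht) (hpos n).ne'⟩)
          have h2 := (h1.const_mul (-2 * t)).add (ha.const_mul t)
          have e : t * (u - 2 * Real.cos θ) = -2 * t * Real.cos θ + t * u := by ring
          rw [e]
          refine h2.congr fun n => ?_
          have := (hpos n).ne'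
          simp only [Function.comp, smul_eq_mul]
          field_simp
          ring
      have hδC : Tendsto (fun n => ((-t / s n : ℝ) : ℂ)) atTop (𝓝 0) := by
        have := (Complex.continuous_ofReal.tendsto 0).comp hδ
        simpa [Function.comp_def] using this
      have hphC := (Complex.continuous_ofReal.tendsto _).comp hph
      have h3 : Tendsto (fun n => Complex.exp ((2 * s n * (Real.sin (θ + (-t / s n)) - Real.sin θ) - a n * (-t / s n) : ℝ) * Complex.I))
          atTop (𝓝 (Complex.exp ((t * (u - 2 * Real.cos θ) : ℝ) * Complex.I))) :=
        (Complex.continuous_exp.tendsto _).comp (hphC.mul_const Complex.I)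
      have h4 : Tendsto (fun n => Complex.exp ((d : ℤ) * (θ + (-t / s n : ℝ)) * Complex.I)) atTop
          (𝓝 (Complex.exp ((d : ℤ) * (θ + 0) * Complex.I))) :=
        (Complex.continuous_exp.tendsto _).comp
          (((hδC.const_add (θ : ℂ)).const_mul ((d : ℤ) : ℂ)).mul_const Complex.I)
      have h5 := (h3.mul (((h4.const_mul (c : ℂ)).const_add 1).const_mul
        (1 + c * Complex.exp (-((d : ℤ) * θ * Complex.I))))).const_mul (2 * Real.pi : ℂ)⁻¹
      refine (h5.congr fun n => rfl).trans_eq ?_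
      congr 1
      rw [← hprod, add_zero]
      push_cast
      ring
  · intro θ hθ
    have h1 : u - 2 * Real.cos θ < 0 ↔ Real.cos φ < Real.cos |θ| := by
      rw [hcosφ, Real.cos_abs]
      constructor <;> intro h <;> linarith
    rw [h1, Real.strictAntiOn_cos.lt_iff_gt ⟨hφ0.le, hφ1.le⟩
      ⟨abs_nonneg _, abs_le.2 ⟨hθ.1.le, hθ.2⟩⟩]
    exact abs_lt
  · intro θ hθ h
    have h1 : Real.cos |θ| = Real.cos φ := by
      rw [hcosφ, Real.cos_abs]; linarith
    have := Real.injOn_cos ⟨abs_nonneg _, abs_le.2 ⟨hθ.1.le, hθ.2⟩⟩ ⟨hφ0.le, hφ1.le⟩ h1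
    rcases abs_cases θ with h | h
    · right; linarith
    · left; linarith

/-- Bulk asymptotics of the discrete Bessel kernel: the discrete sine kernel.
Half-integers `xₙ = aₙ + 1/2`, `yₙ = bₙ + 1/2` are encoded by integers. -/
theorem besselKernel_tendsto_sine_kernel
    (u : ℝ) (hu : u ∈ Set.Ioo (-2 : ℝ) 2) (d : ℤ)
    (ξ : ℕ → ℝ) (hpos : ∀ n, 0 < ξ n) (hξ : Tendsto ξ atTop atTop)
    (a b : ℕ → ℤ) (hd : ∀ n, a n - b n = d)
    (ha : Tendsto (fun n => ((a n : ℝ) + 1/2) / Real.sqrt (ξ n)) atTop (𝓝 u)) :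
    Tendsto (fun n => besselKernel (a n) (b n) (ξ n)) atTop
      (𝓝 ((Ksin d (Real.arccos (u / 2)) : ℝ) : ℂ)) := by
  have hpi := Real.pi_pos
  have hs0 : ∀ n, 0 < Real.sqrt (ξ n) := fun n => Real.sqrt_pos.2 (hpos n)
  have hs : Tendsto (fun n => Real.sqrt (ξ n)) atTop atTop := Real.tendsto_sqrt_atTop.comp hξ
  have ha' : Tendsto (fun n => (a n : ℝ) / Real.sqrt (ξ n)) atTop (𝓝 u) := by
    have h := ha.sub (hs.const_div_atTop (1/2))
    rw [sub_zero] at h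
    refine h.congr fun n => ?_
    have := (hs0 n).ne'
    field_simp
    ring
  have h1 := S_limit u hu d _ hs0 hs a b hd ha' (1/2) (by rw [abs_of_pos] <;> norm_num)
  have h2 := S_limit u hu d _ hs0 hs a b hd ha' (-(1/2)) (by rw [abs_neg, abs_of_pos] <;> norm_num)
  have h3 := (h1.sub h2).const_mul (1/2)
  have h4 := (Complex.continuous_ofReal.tendsto _).comp h3
  have elim : 1/2 * ((∫ θ in -Real.arccos (u / 2)..Real.arccos (u / 2),
        (1 + (1/2 : ℝ) ^ 2 + 2 * (1/2) * Real.cos (d * θ)) / (2 * Real.pi)) -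
      ∫ θ in -Real.arccos (u / 2)..Real.arccos (u / 2),
        (1 + (-(1/2) : ℝ) ^ 2 + 2 * (-(1/2)) * Real.cos (d * θ)) / (2 * Real.pi)) =
      Ksin d (Real.arccos (u / 2)) := by
    rw [← intervalIntegral.integral_sub (Continuous.intervalIntegrable (by fun_prop) _ _)
      (Continuous.intervalIntegrable (by fun_prop) _ _)]
    have : ∀ θ : ℝ, (1 + (1/2 : ℝ) ^ 2 + 2 * (1/2) * Real.cos (d * θ)) / (2 * Real.pi) -
      (1 + (-(1/2) : ℝ) ^ 2 + 2 * (-(1/2)) * Real.cos (d * θ)) / (2 * Real.pi) =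
      Real.cos (d * θ) / Real.pi := by
      intro θ; field_simp; ring
    simp_rw [this]
    rw [intervalIntegral.integral_div]
    unfold Ksin
    split_ifs with hd0
    · simp [hd0]; ring
    · have hdR : (d : ℝ) ≠ 0 := by exact_mod_cast hd0
      rw [intervalIntegral.integral_comp_mul_left (fun x => Real.cos x) hdR, integral_cos,
        mul_neg, Real.sin_neg, smul_eq_mul, mul_comm (d : ℝ)]
      field_simp
      ring
  rw [elim] at h4
  refine h4.congr fun n => ?_
  simp only [Function.comp]
  set s := Real.sqrt (ξ n)
  have hre : ∀ m, besselJ s m = ((besselJ s m).re : ℂ) :=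
    fun m => (Complex.conj_eq_iff_re.1 (besselJ_conj s m)).symm
  have hinj : Function.Injective (fun k : ℕ => (k : ℤ) + 1) := fun x y h => by simpa using h
  have hsum : ∀ c : ℝ, Summable fun k : ℕ =>
      ‖besselJ s (a n + ((k : ℤ) + 1)) + c * besselJ s (b n + ((k : ℤ) + 1))‖ ^ 2 := by
    intro c
    have h := (testH_hasSum s c 0 (a n) (b n)).summable
    have h' : Summable fun k : ℤ => ‖besselJ s (a n + k) + c * besselJ s (b n + k)‖ ^ 2 := by
      rw [← Complex.summable_ofReal]
      refine h.congr fun k => ?_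
      simp
    exact h'.comp_injective hinj
  rw [hasSum_int_pos (fun k => ‖besselJ s (a n + k) + (1/2 : ℝ) * besselJ s (b n + k)‖ ^ 2) s (hs0 n),
    hasSum_int_pos (fun k => ‖besselJ s (a n + k) + (-(1/2) : ℝ) * besselJ s (b n + k)‖ ^ 2) s (hs0 n),
    ← (hsum (1/2)).tsum_sub (hsum (-(1/2))), ← tsum_mul_left, Complex.ofReal_tsum,
    ← (besselKernel_eq (a n) (b n) (ξ n)).tsum_eq]
  refine tsum_congr fun k => ?_
  change _ = besselJ s _ * besselJ s _
  rw [hre (a n + _), hre (b n + _)]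
  simp only [← Complex.ofReal_mul, ← Complex.ofReal_add, Complex.norm_real, Real.norm_eq_abs, sq_abs]
  congr 1
  ring
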